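/- arXiv:1309.2038 — 2 statements merged into one kernel-verified Lean document; each statement's English description precedes it below -/
import Mathlib

section
/- Let E be a finite type, f : Finset E → ℝ a nonnegative monotone proper submodular function, and B, T ⊆ E. Suppose that for each e ∈ T \ B a set C(e) ⊆ B with e ∉ C(e) is given. Then f(T) ≤ f(B) + ∑_{e ∈ T\B} (f(C(e) ∪ {e}) − f(C(e))). -/
/-!
Add the elements of `T \ B` to `B` one at a time. When `e` is added, the current set contains
`B ⊇ C e`, so by diminishing returns the gain is at most `f (insert e (C e)) - f (C e)`.
-/

/-- A submodular function on a lattice. Set functions are the case `L = Finset α`, where `⊔` and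
`⊓` are `∪` and `∩`. -/
def Submodular {L M : Type*} [Lattice L] [Add M] [LE M] (f : L → M) : Prop :=
  ∀ a b : L, f (a ⊔ b) + f (a ⊓ b) ≤ f a + f b

section SetFunction

variable {α M : Type*} [DecidableEq α] [AddCommGroup M] [PartialOrder M] [IsOrderedAddMonoid M]
  {f : Finset α → M}

theorem Submodular.map_insert_sub_le_map_insert_sub (hf : Submodular f) {A B : Finset α} {e : α}
    (hAB : A ⊆ B) (he : e ∉ B) :
    f (insert e B) - f B ≤ f (insert e A) - f A := by
  have h_union : insert e A ∪ B = insert e B := by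
    rw [Finset.insert_union, Finset.union_eq_right.mpr hAB]
  have h_inter : insert e A ∩ B = A := by
    rw [Finset.insert_inter_of_notMem he, Finset.inter_eq_left.mpr hAB]
  have h_sub : f (insert e A ∪ B) + f (insert e A ∩ B) ≤ f (insert e A) + f B :=
    hf (insert e A) B
  rw [h_union, h_inter] at h_sub
  exact sub_le_sub_iff.mpr h_sub

theorem Submodular.map_union_le_add_sum (hf : Submodular f) {B S : Finset α} (hBS : Disjoint B S)
    {C : α → Finset α} (hC : ∀ e ∈ S, C e ⊆ B) :
    f (B ∪ S) ≤ f B + ∑ e ∈ S, (f (insert e (C e)) - f (C e)) := by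
  induction S using Finset.induction_on with
  | empty => simp
  | insert e S he ih =>
    obtain ⟨heB, hBS⟩ := Finset.disjoint_insert_right.mp hBS
    obtain ⟨hCe, hCS⟩ := (Finset.forall_mem_insert _ _ _).mp hC
    have h_gain : f (insert e (B ∪ S)) - f (B ∪ S) ≤ f (insert e (C e)) - f (C e) :=
      hf.map_insert_sub_le_map_insert_sub (hCe.trans Finset.subset_union_left)
        (Finset.notMem_union.mpr ⟨heB, he⟩)
    calc f (B ∪ insert e S)
        = (f (insert e (B ∪ S)) - f (B ∪ S)) + f (B ∪ S) := by
          rw [Finset.union_insert, sub_add_cancel]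
      _ ≤ (f (insert e (C e)) - f (C e)) +
            (f B + ∑ x ∈ S, (f (insert x (C x)) - f (C x))) :=
          add_le_add h_gain (ih hBS hCS)
      _ = f B + ∑ x ∈ insert e S, (f (insert x (C x)) - f (C x)) := by
          rw [Finset.sum_insert he, add_left_comm]

theorem stmt_3_general (hsub : Submodular f) (hmono : Monotone f) (B T : Finset α)
    (C : α → Finset α) (hCB : ∀ e ∈ T \ B, C e ⊆ B) :
    f T ≤ f B + ∑ e ∈ T \ B, (f (insert e (C e)) - f (C e)) :=
  calc f T ≤ f (B ∪ T) := hmono Finset.subset_union_right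
    _ = f (B ∪ T \ B) := by rw [Finset.union_sdiff_self_eq_union]
    _ ≤ f B + ∑ e ∈ T \ B, (f (insert e (C e)) - f (C e)) :=
      hsub.map_union_le_add_sum Finset.disjoint_sdiff hCB

end SetFunction

/-- Inequality (6.2) in the proof of Lemma 3.3: the `f`-value of any set `T`
exceeds `f(B)` by at most the sum of the marginal gains of the elements of
`T \ B` measured relative to subsets `C e ⊆ B`. -/
theorem stmt_3 {α : Type*} [Fintype α] [DecidableEq α]
    (f : Finset α → ℝ)
    (hsub : ∀ A B : Finset α, f (A ∪ B) + f (A ∩ B) ≤ f A + f B)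
    (hmono : ∀ A B : Finset α, A ⊆ B → f A ≤ f B)
    (hproper : f ∅ = 0)
    (hnonneg : ∀ A : Finset α, 0 ≤ f A)
    (B T : Finset α) (C : α → Finset α)
    (hCB : ∀ e ∈ T \ B, C e ⊆ B)
    (hCe : ∀ e ∈ T \ B, e ∉ C e) :
    f T ≤ f B + ∑ e ∈ T \ B, (f (insert e (C e)) - f (C e)) :=
  stmt_3_general hsub (fun A B hAB => hmono A B hAB) B T C hCB
end

section
/- Under the stream setup, let I, K ⊆ E be disjoint, put B := I ∪ K, and let γ > 0. Suppose (i) C(e) ⊆ {e' ∈ B : e' < e} for every e ∈ E, (ii) {e' ∈ I : e' < e} ⊆ C(e) for every e ∈ I, and (iii) w(K) ≤ w(I)/γ. Then for every T ⊆ E, f(T) ≤ (1 + 1/γ)·f(I) + w(T). -/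
/-!
By diminishing returns, the marginal gain of an element can only decrease when the set it is added
to grows. Hence, when the elements of a set are added in stream order, `w e` is at least the
increment of `f` if `C e` is contained in what has been collected so far, and at most that increment
if `C e` contains it. The former gives `f (I ∪ K) ≤ f I + w K` and
`f (I ∪ K ∪ T) ≤ f (I ∪ K) + w T`, the latter gives `w I ≤ f I`, hence `w K ≤ f I / γ`.
-/

section Submodular

variable {L R : Type*} [Lattice L]

/-- Submodularity of a function on a lattice; on `Finset α` the lattice operations are `∪`, `∩`. -/
def IsSubmodular [Add R] [LE R] (f : L → R) : Prop :=
  ∀ a b, f (a ⊔ b) + f (a ⊓ b) ≤ f a + f b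

theorem IsSubmodular.map_sup_sub_le_map_sup_sub [AddCommGroup R] [PartialOrder R]
    [IsOrderedAddMonoid R] {f : L → R} (hsub : IsSubmodular f) (hmono : Monotone f)
    {a b : L} (hab : a ≤ b) (x : L) :
    f (x ⊔ b) - f b ≤ f (x ⊔ a) - f a := by
  have hsup : (x ⊔ a) ⊔ b = x ⊔ b := by rw [sup_assoc, sup_eq_right.2 hab]
  have hinf : a ≤ (x ⊔ a) ⊓ b := le_inf le_sup_right hab
  rw [sub_le_sub_iff]
  calc f (x ⊔ b) + f a ≤ f (x ⊔ b) + f ((x ⊔ a) ⊓ b) := by gcongr; exact hmono hinf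
    _ ≤ f (x ⊔ a) + f b := hsup ▸ hsub (x ⊔ a) b

end Submodular

section Weight

variable {α R : Type*} [DecidableEq α]

/-- The weight `w e` of `e` in a stream: its marginal gain over the set `C e` of shadow and solution
elements present when `e` is processed. -/
def weight [Sub R] (f : Finset α → R) (C : α → Finset α) (e : α) : R :=
  f (insert e (C e)) - f (C e)

variable [AddCommGroup R] [PartialOrder R] [IsOrderedAddMonoid R]
  {f : Finset α → R} {C : α → Finset α}

theorem map_insert_sub_le_weight (hsub : IsSubmodular f) (hmono : Monotone f) {e : α}
    {S : Finset α} (hS : C e ⊆ S) : f (insert e S) - f S ≤ weight f C e :=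
  hsub.map_sup_sub_le_map_sup_sub hmono hS {e}

theorem weight_le_map_insert_sub (hsub : IsSubmodular f) (hmono : Monotone f) {e : α}
    {S : Finset α} (hS : S ⊆ C e) : weight f C e ≤ f (insert e S) - f S :=
  hsub.map_sup_sub_le_map_sup_sub hmono hS {e}

end Weight

section FilterLT

variable {α : Type*} [Preorder α] [DecidableEq α] [DecidableLT α]

theorem filter_lt_insert_of_lt {a e : α} (h : e < a) (s : Finset α) :
    {x ∈ insert a s | x < e} = {x ∈ s | x < e} := by
  rw [Finset.filter_insert, if_neg h.not_gt]

theorem filter_lt_insert_self {a : α} {s : Finset α} (hs : ∀ x ∈ s, x < a) :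
    {x ∈ insert a s | x < a} = s := by
  rw [Finset.filter_insert, if_neg (lt_irrefl a), Finset.filter_true_of_mem hs]

end FilterLT

section Stream

variable {α R : Type*} [LinearOrder α] [AddCommGroup R] [PartialOrder R] [IsOrderedAddMonoid R]
  {f : Finset α → R} {C : α → Finset α}

theorem map_union_le_add_sum_weight (hsub : IsSubmodular f) (hmono : Monotone f)
    {S J : Finset α} (hC : ∀ e ∈ J, C e ⊆ S ∪ {x ∈ J | x < e}) :
    f (S ∪ J) ≤ f S + ∑ e ∈ J, weight f C e := by
  induction J using Finset.induction_on_max with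
  | empty => simp
  | insert a s hs ih =>
    have ha : a ∉ s := fun h => (hs a h).false
    have hCs : ∀ e ∈ s, C e ⊆ S ∪ {x ∈ s | x < e} := fun e he =>
      filter_lt_insert_of_lt (hs e he) s ▸ hC e (Finset.mem_insert_of_mem he)
    have hCa : C a ⊆ S ∪ s := by
      simpa only [filter_lt_insert_self hs] using hC a (Finset.mem_insert_self a s)
    calc f (S ∪ insert a s) = (f (insert a (S ∪ s)) - f (S ∪ s)) + f (S ∪ s) := by
          rw [Finset.union_insert, sub_add_cancel]
      _ ≤ weight f C a + (f S + ∑ e ∈ s, weight f C e) :=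
          add_le_add (map_insert_sub_le_weight hsub hmono hCa) (ih hCs)
      _ = f S + ∑ e ∈ insert a s, weight f C e := by
          rw [Finset.sum_insert ha, add_left_comm]

theorem sum_weight_le_map_sub_map_empty (hsub : IsSubmodular f) (hmono : Monotone f)
    {J : Finset α} (hC : ∀ e ∈ J, {x ∈ J | x < e} ⊆ C e) :
    ∑ e ∈ J, weight f C e ≤ f J - f ∅ := by
  induction J using Finset.induction_on_max with
  | empty => simp
  | insert a s hs ih =>
    have ha : a ∉ s := fun h => (hs a h).false
    have hCs : ∀ e ∈ s, {x ∈ s | x < e} ⊆ C e := fun e he =>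
      filter_lt_insert_of_lt (hs e he) s ▸ hC e (Finset.mem_insert_of_mem he)
    have hCa : s ⊆ C a := by
      simpa only [filter_lt_insert_self hs] using hC a (Finset.mem_insert_self a s)
    calc ∑ e ∈ insert a s, weight f C e = weight f C a + ∑ e ∈ s, weight f C e :=
          Finset.sum_insert ha
      _ ≤ (f (insert a s) - f s) + (f s - f ∅) :=
          add_le_add (weight_le_map_insert_sub hsub hmono hCa) (ih hCs)
      _ = f (insert a s) - f ∅ := sub_add_sub_cancel _ _ _

end Stream

theorem stmt_4_general {α R : Type*} [LinearOrder α]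
    [Field R] [LinearOrder R] [IsStrictOrderedRing R]
    {f : Finset α → R} (hsub : IsSubmodular f) (hmono : Monotone f) (hempty : 0 ≤ f ∅)
    {C : α → Finset α} {I K : Finset α} {γ : R} (hγ : 0 < γ)
    (hCB : ∀ e, C e ⊆ {x ∈ I ∪ K | x < e}) (hI : ∀ e ∈ I, {x ∈ I | x < e} ⊆ C e)
    (hK : ∑ e ∈ K, weight f C e ≤ (∑ e ∈ I, weight f C e) / γ) (T : Finset α) :
    f T ≤ (1 + 1 / γ) * f I + ∑ e ∈ T, weight f C e := by
  have hCK : ∀ e ∈ K, C e ⊆ I ∪ {x ∈ K | x < e} := fun e _ =>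
    (hCB e).trans <| by
      rw [Finset.filter_union]
      exact Finset.union_subset_union_left (Finset.filter_subset _ I)
  have hCT : ∀ e ∈ T, C e ⊆ (I ∪ K) ∪ {x ∈ T | x < e} := fun e _ =>
    ((hCB e).trans (Finset.filter_subset _ _)).trans Finset.subset_union_left
  have hwI : ∑ e ∈ I, weight f C e ≤ f I :=
    (sum_weight_le_map_sub_map_empty hsub hmono hI).trans (sub_le_self _ hempty)
  calc f T ≤ f (I ∪ K ∪ T) := hmono Finset.subset_union_right
    _ ≤ f (I ∪ K) + ∑ e ∈ T, weight f C e := map_union_le_add_sum_weight hsub hmono hCT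
    _ ≤ f I + ∑ e ∈ K, weight f C e + ∑ e ∈ T, weight f C e := by
        gcongr; exact map_union_le_add_sum_weight hsub hmono hCK
    _ ≤ f I + f I / γ + ∑ e ∈ T, weight f C e := by
        gcongr; exact hK.trans (by gcongr)
    _ = (1 + 1 / γ) * f I + ∑ e ∈ T, weight f C e := by ring

/-- Lemma 3.3 (combinatorial form): under the stream setup, with `I` the output
solution, `K` the killed elements, `B = I ∪ K`, `w(K) ≤ w(I)/γ`, for every set
`T` we have `f(T) ≤ (1 + 1/γ)·f(I) + w(T)`, where
`w(e) := f(C(e) ∪ {e}) − f(C(e))` and `w(A) := ∑_{e∈A} w(e)`. -/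
theorem stmt_4 {α : Type*} [Fintype α] [LinearOrder α]
    (f : Finset α → ℝ)
    (hsub : ∀ A B : Finset α, f (A ∪ B) + f (A ∩ B) ≤ f A + f B)
    (hmono : ∀ A B : Finset α, A ⊆ B → f A ≤ f B)
    (hproper : f ∅ = 0)
    (hnonneg : ∀ A : Finset α, 0 ≤ f A)
    (C : α → Finset α)
    (hC : ∀ e, ∀ e' ∈ C e, e' < e)
    (I K : Finset α) (hdisj : Disjoint I K)
    (γ : ℝ) (hγ : 0 < γ)
    (hCB : ∀ e : α, C e ⊆ (I ∪ K).filter (fun e' => e' < e))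
    (hI : ∀ e ∈ I, I.filter (fun e' => e' < e) ⊆ C e)
    (hK : ∑ e ∈ K, (f (insert e (C e)) - f (C e))
        ≤ (∑ e ∈ I, (f (insert e (C e)) - f (C e))) / γ)
    (T : Finset α) :
    f T ≤ (1 + 1 / γ) * f I + ∑ e ∈ T, (f (insert e (C e)) - f (C e)) := by
  exact stmt_4_general hsub (fun _ _ => hmono _ _) hproper.ge hγ hCB hI hK T
end
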